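/- (SAGA, strongly convex, high probability.) Suppose f is μ-strongly convex (μ > 0) with minimizer x* and κ := L/μ. Fix K ≥ 1, δ ∈ (0,1), let τ = ⌈(8N/3)·log(NK/δ)⌉, set α = 1/(16 L τ), and assume K > τ. Then, with probability at least 1 − δ over the i.i.d. uniform sampling, the SAGA iterates satisfy f(x_K) − f(x*) ≤ 6 L B² · (1 − 1/(64 τ κ))^K. -/

import Mathlib

open scoped RealInnerProductSpace

/-!
A SAGA step is an inexact gradient step whose error is controlled by how stale the stored gradients
are. If every window of `τ` consecutive samples contains every index, then after `τ` iterations no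
stored gradient is older than `τ` steps, so its error is at most `L` times the distance travelled
over the last `τ` steps; before that, a never-sampled index stores `0 = ∇fᵢ(xᵢ*)`, which costs an
extra `L B`. Combined with the Polyak–Łojasiewicz inequality, the gap `Fₖ = f(xₖ) - f(x*)` obeys
`Fₖ₊₁ ≤ (1 - αμ) Fₖ - a ‖gₖ‖² + b ∑_{k-τ ≤ j < k} ‖gⱼ‖² + D 𝟙[k < τ]`,
and for `16 L τ α ≤ 1` the negative terms absorb the delayed ones. A fixed window misses a fixed
index with probability `(1 - 1/N)^τ ≤ exp(-τ/N)`, and a union bound over windows and indices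
controls the bad event.
-/

section Smoothness

variable {E : Type*} [NormedAddCommGroup E] [InnerProductSpace ℝ E] [CompleteSpace E]
  {f : E → ℝ} {L μ : ℝ}

lemma hasDerivAt_comp_add_smul {x v : E} {t : ℝ} (hf : DifferentiableAt ℝ f (x + t • v)) :
    HasDerivAt (fun s : ℝ => f (x + s • v)) ⟪gradient f (x + t • v), v⟫ t := by
  have hline : HasDerivAt (fun s : ℝ => x + s • v) v t := by
    simpa using ((hasDerivAt_id t).smul_const v).const_add x
  rw [inner_gradient_left]
  exact hf.hasFDerivAt.comp_hasDerivAt t hline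

lemma le_add_inner_gradient_add_sq (hf : Differentiable ℝ f)
    (hsmooth : ∀ x y, ‖gradient f x - gradient f y‖ ≤ L * ‖x - y‖) (x y : E) :
    f y ≤ f x + ⟪gradient f x, y - x⟫ + L / 2 * ‖y - x‖ ^ 2 := by
  set v := y - x with hv
  let φ : ℝ → ℝ := fun t => f (x + t • v) - t * ⟪gradient f x, v⟫ - L / 2 * ‖v‖ ^ 2 * t ^ 2
  have hφ (t : ℝ) : HasDerivAt φ (⟪gradient f (x + t • v), v⟫ - 1 * ⟪gradient f x, v⟫
      - L / 2 * ‖v‖ ^ 2 * (2 * t)) t := by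
    refine ((hasDerivAt_comp_add_smul (hf _)).sub ((hasDerivAt_id t).mul_const _)).sub ?_
    simpa using (hasDerivAt_pow 2 t).const_mul (L / 2 * ‖v‖ ^ 2)
  have hφ_anti : AntitoneOn φ (Set.Icc 0 1) := by
    refine antitoneOn_of_deriv_nonpos (convex_Icc 0 1)
      (fun t _ => (hφ t).continuousAt.continuousWithinAt)
      (fun t _ => (hφ t).differentiableAt.differentiableWithinAt) fun t ht => ?_
    have ht0 : 0 ≤ t := (interior_subset ht).1
    have hinner : ⟪gradient f (x + t • v) - gradient f x, v⟫ ≤ L * (t * ‖v‖) * ‖v‖ :=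
      calc ⟪gradient f (x + t • v) - gradient f x, v⟫
        _ ≤ ‖gradient f (x + t • v) - gradient f x‖ * ‖v‖ := real_inner_le_norm _ _
        _ ≤ L * ‖x + t • v - x‖ * ‖v‖ := by gcongr; exact hsmooth _ _
        _ = L * (t * ‖v‖) * ‖v‖ := by
          rw [add_sub_cancel_left, norm_smul, Real.norm_of_nonneg ht0]
    rw [inner_sub_left] at hinner
    rw [(hφ t).deriv]
    linarith
  have hφ01 : φ 1 ≤ φ 0 :=
    hφ_anti (Set.left_mem_Icc.2 zero_le_one) (Set.right_mem_Icc.2 zero_le_one) zero_le_one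
  simp only [φ, one_smul, zero_smul, add_zero, hv, add_sub_cancel] at hφ01
  linarith

lemma gradient_eq_zero_of_forall_le {z : E} (hz : ∀ y, f z ≤ f y) : gradient f z = 0 := by
  have hmin : IsLocalMin f z := Filter.Eventually.of_forall hz
  rw [gradient, hmin.fderiv_eq_zero, map_zero]

lemma sub_le_sq_of_forall_le (hf : Differentiable ℝ f)
    (hsmooth : ∀ x y, ‖gradient f x - gradient f y‖ ≤ L * ‖x - y‖) {z : E}
    (hz : ∀ y, f z ≤ f y) (x : E) : f x - f z ≤ L / 2 * ‖x - z‖ ^ 2 := by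
  have hdescent := le_add_inner_gradient_add_sq hf hsmooth z x
  rw [gradient_eq_zero_of_forall_le hz, inner_zero_left] at hdescent
  linarith

lemma polyakLojasiewicz_of_strongConvex (hμ : 0 ≤ μ)
    (hsc : ∀ y z, f y + ⟪gradient f y, z - y⟫ + μ / 2 * ‖z - y‖ ^ 2 ≤ f z) (y z : E) :
    2 * μ * (f y - f z) ≤ ‖gradient f y‖ ^ 2 := by
  have hsq : 0 ≤ ‖gradient f y + μ • (z - y)‖ ^ 2 := by positivity
  rw [norm_add_sq_real, norm_smul, Real.norm_of_nonneg hμ, inner_smul_right] at hsq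
  nlinarith [hsc y z]

lemma strongConvexity_le_smoothness [Nontrivial E] (hf : Differentiable ℝ f)
    (hsmooth : ∀ x y, ‖gradient f x - gradient f y‖ ≤ L * ‖x - y‖)
    (hsc : ∀ y z, f y + ⟪gradient f y, z - y⟫ + μ / 2 * ‖z - y‖ ^ 2 ≤ f z) : μ ≤ L := by
  obtain ⟨v, hv⟩ := exists_ne (0 : E)
  have hlower := hsc 0 v
  have hupper := le_add_inner_gradient_add_sq hf hsmooth 0 v
  rw [sub_zero] at hlower hupper
  have hv_sq : 0 < ‖v‖ ^ 2 := by positivity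
  have : μ / 2 ≤ L / 2 := le_of_mul_le_mul_right (by linarith) hv_sq
  linarith

lemma inexact_gradient_step_le (hf : Differentiable ℝ f)
    (hsmooth : ∀ x y, ‖gradient f x - gradient f y‖ ≤ L * ‖x - y‖) (x g : E) (α : ℝ) :
    f (x - α • g) ≤ f x - α / 2 * ‖gradient f x‖ ^ 2 - α / 2 * (1 - L * α) * ‖g‖ ^ 2
      + α / 2 * ‖g - gradient f x‖ ^ 2 := by
  have hdescent := le_add_inner_gradient_add_sq hf hsmooth x (x - α • g)
  rw [sub_sub_cancel_left, inner_neg_right, inner_smul_right, norm_neg, norm_smul, mul_pow,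
    Real.norm_eq_abs, sq_abs] at hdescent
  rw [norm_sub_sq_real, real_inner_comm]
  linarith

end Smoothness

section Average

variable {E ι : Type*} [NormedAddCommGroup E] [InnerProductSpace ℝ E] [Fintype ι]

lemma norm_inv_card_smul_sum_le [Nonempty ι] {v : ι → E} {r : ℝ} (hv : ∀ i, ‖v i‖ ≤ r) :
    ‖(Fintype.card ι : ℝ)⁻¹ • ∑ i, v i‖ ≤ r := by
  rw [norm_smul, Real.norm_of_nonneg (by positivity), inv_mul_le_iff₀ (by positivity)]
  simpa using norm_sum_le_of_le Finset.univ fun i _ => hv i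

variable [CompleteSpace E] {fi : ι → E → ℝ} {f : E → ℝ}

lemma hasGradientAt_average (hdiff : ∀ i, Differentiable ℝ (fi i))
    (hf : ∀ z, f z = (∑ i, fi i z) / Fintype.card ι) (z : E) :
    HasGradientAt f ((Fintype.card ι : ℝ)⁻¹ • ∑ i, gradient (fi i) z) z := by
  have hsum : HasFDerivAt (fun z => ∑ i, fi i z) (∑ i, fderiv ℝ (fi i) z) z :=
    HasFDerivAt.fun_sum fun i _ => (hdiff i z).hasFDerivAt
  rw [hasGradientAt_iff_hasFDerivAt, funext hf]
  simpa [div_eq_inv_mul, toDual_gradient] using hsum.const_mul (Fintype.card ι : ℝ)⁻¹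

lemma differentiable_average (hdiff : ∀ i, Differentiable ℝ (fi i))
    (hf : ∀ z, f z = (∑ i, fi i z) / Fintype.card ι) : Differentiable ℝ f :=
  fun z => (hasGradientAt_average hdiff hf z).differentiableAt

lemma norm_gradient_average_sub_le [Nonempty ι] {L : ℝ} (hdiff : ∀ i, Differentiable ℝ (fi i))
    (hf : ∀ z, f z = (∑ i, fi i z) / Fintype.card ι)
    (hsmooth : ∀ i x y, ‖gradient (fi i) x - gradient (fi i) y‖ ≤ L * ‖x - y‖) (x y : E) :
    ‖gradient f x - gradient f y‖ ≤ L * ‖x - y‖ := by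
  rw [(hasGradientAt_average hdiff hf x).gradient, (hasGradientAt_average hdiff hf y).gradient,
    ← smul_sub, ← Finset.sum_sub_distrib]
  exact norm_inv_card_smul_sum_le fun i => hsmooth i x y

end Average

section DelayedRecursion

lemma le_pow_mul_add_sum_of_succ_le {K : ℕ} {ρ : ℝ} {u c : ℕ → ℝ} (hρ : 0 ≤ ρ)
    (hu : ∀ k < K, u (k + 1) ≤ ρ * u k + c k) :
    u K ≤ ρ ^ K * u 0 + ∑ k ∈ Finset.range K, ρ ^ (K - (k + 1)) * c k := by
  have hgronwall := discrete_gronwall_prod_general (u := u) (c := fun _ => ρ)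
    (b := fun k => u (k + 1) - ρ * u k) (fun k _ => by linarith) (fun _ _ => hρ) K.zero_le
  simp only [Finset.prod_const, Nat.card_Ico, Nat.Ico_zero_eq_range, Finset.card_range]
    at hgronwall
  rw [mul_comm (ρ ^ K)]
  refine hgronwall.trans (add_le_add_right (Finset.sum_le_sum fun k hk => ?_) _)
  rw [mul_comm]
  gcongr
  linarith [hu k (Finset.mem_range.1 hk)]

lemma sum_mul_sum_Ico_sub_le {K τ : ℕ} {c w G : ℕ → ℝ} (hG : ∀ j, 0 ≤ G j) (hw : ∀ j, 0 ≤ w j)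
    (hcw : ∀ k < K, ∀ j ∈ Finset.Ico (k - τ) k, c k ≤ w j) :
    ∑ k ∈ Finset.range K, c k * ∑ j ∈ Finset.Ico (k - τ) k, G j
      ≤ τ * ∑ j ∈ Finset.range K, w j * G j := by
  calc ∑ k ∈ Finset.range K, c k * ∑ j ∈ Finset.Ico (k - τ) k, G j
    _ ≤ ∑ k ∈ Finset.range K, ∑ j ∈ Finset.Ico (k - τ) k, w j * G j := by
      refine Finset.sum_le_sum fun k hk => ?_
      rw [Finset.mul_sum]
      exact Finset.sum_le_sum fun j hj =>
        mul_le_mul_of_nonneg_right (hcw k (Finset.mem_range.1 hk) j hj) (hG j)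
    _ = ∑ j ∈ Finset.range K, ∑ k ∈ Finset.Ioo j K with k ≤ j + τ, w j * G j :=
      Finset.sum_comm' fun k j => by
        simp only [Finset.mem_range, Finset.mem_Ico, Finset.mem_filter, Finset.mem_Ioo]
        omega
    _ ≤ ∑ j ∈ Finset.range K, τ * (w j * G j) := by
      refine Finset.sum_le_sum fun j _ => ?_
      have hcard : ((Finset.Ioo j K).filter (· ≤ j + τ)).card ≤ τ := by
        refine (Finset.card_le_card (t := Finset.Ioc j (j + τ)) fun k => ?_).trans (by simp)
        simp only [Finset.mem_filter, Finset.mem_Ioo, Finset.mem_Ioc]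
        omega
      rw [Finset.sum_const, nsmul_eq_mul]
      exact mul_le_mul_of_nonneg_right (by exact_mod_cast hcard) (mul_nonneg (hw j) (hG j))
    _ = τ * ∑ j ∈ Finset.range K, w j * G j := (Finset.mul_sum ..).symm

lemma pow_mul_sum_mul_ite_lt_le {K τ : ℕ} {ρ D : ℝ} (hρ0 : 0 ≤ ρ) (hρ1 : ρ ≤ 1) (hD : 0 ≤ D) :
    ρ ^ τ * ∑ k ∈ Finset.range K, ρ ^ (K - (k + 1)) * (if k < τ then D else 0)
      ≤ ρ ^ K * (τ * D) := by
  calc ρ ^ τ * ∑ k ∈ Finset.range K, ρ ^ (K - (k + 1)) * (if k < τ then D else 0)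
    _ ≤ ∑ k ∈ Finset.range K, if k < τ then ρ ^ K * D else 0 := by
      rw [Finset.mul_sum]
      refine Finset.sum_le_sum fun k _ => ?_
      rw [← mul_assoc, ← pow_add, mul_ite, mul_zero]
      split_ifs
      · exact mul_le_mul_of_nonneg_right (pow_le_pow_of_le_one hρ0 hρ1 (by omega)) hD
      · rfl
    _ ≤ ∑ _k ∈ Finset.range τ, ρ ^ K * D := by
      rw [← Finset.sum_filter]
      refine Finset.sum_le_sum_of_subset_of_nonneg (fun _ => ?_) fun _ _ _ => by positivity
      simp
    _ = ρ ^ K * (τ * D) := by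
      rw [Finset.sum_const, Finset.card_range, nsmul_eq_mul]
      ring

lemma le_pow_mul_of_delayed_recursion {K τ : ℕ} {ρ a b D : ℝ} {F G : ℕ → ℝ}
    (hρ0 : 0 < ρ) (hρ1 : ρ ≤ 1) (hG : ∀ k, 0 ≤ G k) (hb : 0 ≤ b) (hD : 0 ≤ D)
    (hab : b * τ ≤ a * ρ ^ τ)
    (hrec : ∀ k < K, F (k + 1) ≤ ρ * F k +
      (-a * G k + b * ∑ j ∈ Finset.Ico (k - τ) k, G j + if k < τ then D else 0)) :
    F K ≤ ρ ^ K * (F 0 + τ * D / ρ ^ τ) := by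
  let w : ℕ → ℝ := fun k => ρ ^ (K - (k + 1))
  have hw (k : ℕ) : 0 ≤ w k := pow_nonneg hρ0.le _
  have hunrolled : F K ≤ ρ ^ K * F 0 + ∑ k ∈ Finset.range K, w k *
      (-a * G k + b * ∑ j ∈ Finset.Ico (k - τ) k, G j + if k < τ then D else 0) :=
    le_pow_mul_add_sum_of_succ_le hρ0.le hrec
  have hdelayed : ∑ k ∈ Finset.range K, ρ ^ τ * w k * ∑ j ∈ Finset.Ico (k - τ) k, G j
      ≤ τ * ∑ j ∈ Finset.range K, w j * G j := by
    refine sum_mul_sum_Ico_sub_le hG hw fun k hk j hj => ?_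
    rw [Finset.mem_Ico] at hj
    rw [← pow_add]
    exact pow_le_pow_of_le_one hρ0.le hρ1 (by omega)
  have hinitial := pow_mul_sum_mul_ite_lt_le (K := K) (τ := τ) hρ0.le hρ1 hD
  have habsorbed : (b * τ - a * ρ ^ τ) * ∑ k ∈ Finset.range K, w k * G k ≤ 0 :=
    mul_nonpos_of_nonpos_of_nonneg (by linarith)
      (Finset.sum_nonneg fun k _ => mul_nonneg (hw k) (hG k))
  have hforcing : ρ ^ τ * ∑ k ∈ Finset.range K, w k *
      (-a * G k + b * ∑ j ∈ Finset.Ico (k - τ) k, G j + if k < τ then D else 0)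
      ≤ ρ ^ K * (τ * D) := by
    simp only [mul_assoc, ← Finset.mul_sum] at hdelayed
    simp only [mul_add, Finset.sum_add_distrib, mul_left_comm (w _), ← Finset.mul_sum]
    linarith [mul_le_mul_of_nonneg_left hdelayed hb]
  refine hunrolled.trans ?_
  rw [mul_add, mul_div_assoc', add_le_add_iff_left, le_div_iff₀' (by positivity)]
  exact hforcing

end DelayedRecursion

section StepSize

variable {L μ α B : ℝ} {τ : ℕ}

lemma fifteen_sixteenths_le_one_sub_pow (hμ : 0 ≤ μ) (hμL : μ ≤ L) (hα : 0 ≤ α)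
    (hτ : 1 ≤ τ) (hατ : 16 * L * τ * α ≤ 1) : 15 / 16 ≤ (1 - α * μ) ^ τ := by
  have hτ' : (1 : ℝ) ≤ τ := by exact_mod_cast hτ
  have hαμ : τ * (α * μ) ≤ 1 / 16 := by
    have : τ * (α * μ) ≤ τ * (α * L) := by gcongr
    linarith
  have hαμ_le : α * μ ≤ 1 / 16 :=
    (le_mul_of_one_le_left (mul_nonneg hα hμ) hτ').trans hαμ
  have hbernoulli := one_add_mul_le_pow (a := -(α * μ)) (by linarith) τ
  rw [← sub_eq_add_neg] at hbernoulli
  linarith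

lemma delayed_coeff_le (hμ : 0 ≤ μ) (hμL : μ ≤ L) (hα : 0 ≤ α) (hτ : 1 ≤ τ)
    (hατ : 16 * L * τ * α ≤ 1) :
    4 * α ^ 3 * L ^ 2 * τ * τ ≤ α / 2 * (1 - L * α) * (1 - α * μ) ^ τ := by
  have hL : 0 ≤ L := hμ.trans hμL
  have hLατ : τ * (L * α) ≤ 1 / 16 := by linarith
  have hLα : L * α ≤ 1 / 16 :=
    (le_mul_of_one_le_left (by positivity) (by exact_mod_cast hτ)).trans hLατ
  have hρτ := fifteen_sixteenths_le_one_sub_pow hμ hμL hα hτ hατ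
  calc 4 * α ^ 3 * L ^ 2 * τ * τ
    _ = α * (4 * (τ * (L * α)) ^ 2) := by ring
    _ ≤ α * (4 * (1 / 16) ^ 2) := by gcongr
    _ ≤ α / 2 * (1 - 1 / 16) * (15 / 16) := by linarith
    _ ≤ α / 2 * (1 - L * α) * (1 - α * μ) ^ τ := by
      gcongr
      exact mul_nonneg (by positivity) (by linarith)

lemma initial_forcing_le (hμ : 0 ≤ μ) (hμL : μ ≤ L) (hα : 0 ≤ α) (hτ : 1 ≤ τ)
    (hατ : 16 * L * τ * α ≤ 1) :
    τ * (4 * α * L ^ 2 * B ^ 2) / (1 - α * μ) ^ τ ≤ L / 2 * B ^ 2 := by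
  have hL : 0 ≤ L := hμ.trans hμL
  have hLατ : τ * (L * α) ≤ 1 / 16 := by linarith
  have hρτ := fifteen_sixteenths_le_one_sub_pow hμ hμL hα hτ hατ
  rw [div_le_iff₀ (by linarith)]
  calc τ * (4 * α * L ^ 2 * B ^ 2)
    _ = 4 * (τ * (L * α)) * (L * B ^ 2) := by ring
    _ ≤ 4 * (1 / 16) * (L * B ^ 2) := by gcongr
    _ ≤ L / 2 * B ^ 2 * (15 / 16) := by linarith [mul_nonneg hL (sq_nonneg B)]
    _ ≤ L / 2 * B ^ 2 * (1 - α * μ) ^ τ := by gcongr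

end StepSize

/-- Every window of `τ` consecutive positions of the sample sequence `ω` that fits into `[0, K)`
contains every index; this is the good event of the probabilistic argument. -/
def IsCovering {ι : Type*} {K : ℕ} (τ : ℕ) (ω : Fin K → ι) : Prop :=
  ∀ k, k + τ ≤ K → ∀ i, ∃ m : Fin K, k ≤ m ∧ (m : ℕ) < k + τ ∧ ω m = i

section Sampling

variable {ι : Type*} [Fintype ι]

lemma card_filter_forall_ne [DecidableEq ι] {κ : Type*} [Fintype κ] [DecidableEq κ]
    (s : Finset κ) (i : ι) :
    ((Finset.univ.filter fun ω : κ → ι => ∀ m ∈ s, ω m ≠ i).card : ℝ)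
      = (1 - 1 / (Fintype.card ι : ℝ)) ^ s.card * (Fintype.card ι : ℝ) ^ Fintype.card κ := by
  have : Nonempty ι := ⟨i⟩
  have hpi : (Finset.univ.filter fun ω : κ → ι => ∀ m ∈ s, ω m ≠ i)
      = Fintype.piFinset fun m => if m ∈ s then Finset.univ.erase i else Finset.univ := by
    ext ω
    simp only [Finset.mem_filter_univ, Fintype.mem_piFinset]
    refine forall_congr' fun m => ?_
    split_ifs with hm <;> simp [hm]
  have hfactor (m : κ) :
      (((if m ∈ s then Finset.univ.erase i else Finset.univ : Finset ι).card : ℕ) : ℝ)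
      = (if m ∈ s then 1 - 1 / (Fintype.card ι : ℝ) else 1) * Fintype.card ι := by
    split_ifs
    · rw [Finset.card_erase_of_mem (Finset.mem_univ i), Finset.card_univ,
        Nat.cast_sub Fintype.card_pos]
      field_simp
      simp
    · simp
  rw [hpi, Fintype.card_piFinset, Nat.cast_prod, Finset.prod_congr rfl fun m _ => hfactor m,
    Finset.prod_mul_distrib, Finset.prod_ite_mem, Finset.univ_inter, Finset.prod_const,
    Finset.prod_const, Finset.card_univ]

lemma card_filter_forall_ne_le_exp [DecidableEq ι] {κ : Type*} [Fintype κ] [DecidableEq κ]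
    (s : Finset κ) (i : ι) :
    ((Finset.univ.filter fun ω : κ → ι => ∀ m ∈ s, ω m ≠ i).card : ℝ)
      ≤ Real.exp (-(s.card / Fintype.card ι)) * (Fintype.card ι : ℝ) ^ Fintype.card κ := by
  have : Nonempty ι := ⟨i⟩
  have hnonneg : 0 ≤ 1 - 1 / (Fintype.card ι : ℝ) := by
    simpa using Nat.cast_inv_le_one (α := ℝ) (Fintype.card ι)
  have hexp : Real.exp (-(s.card / Fintype.card ι))
      = Real.exp (-(1 / (Fintype.card ι : ℝ))) ^ s.card := by
    rw [← Real.exp_nat_mul]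
    ring_nf
  rw [card_filter_forall_ne, hexp]
  gcongr
  exact Real.one_sub_le_exp_neg _

lemma card_filter_window {K τ k : ℕ} (hk : k + τ ≤ K) :
    (Finset.univ.filter fun m : Fin K => k ≤ (m : ℕ) ∧ (m : ℕ) < k + τ).card = τ := by
  have hwindow : (Finset.univ.filter fun m : Fin K => k ≤ (m : ℕ) ∧ (m : ℕ) < k + τ)
      = (Finset.Ico k (k + τ)).attachFin fun m hm => (Finset.mem_Ico.1 hm).2.trans_le hk := by
    ext m
    simp
  rw [hwindow, Finset.card_attachFin, Nat.card_Ico, Nat.add_sub_cancel_left]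

open Classical in
lemma card_filter_not_isCovering_le {K τ : ℕ} (hτ : 1 ≤ τ) :
    ((Finset.univ.filter fun ω : Fin K → ι => ¬ IsCovering τ ω).card : ℝ)
      ≤ K * Fintype.card ι * Real.exp (-(τ / Fintype.card ι)) * (Fintype.card ι : ℝ) ^ K := by
  let window (k : ℕ) : Finset (Fin K) :=
    Finset.univ.filter fun m => k ≤ (m : ℕ) ∧ (m : ℕ) < k + τ
  let missing (p : ℕ × ι) : Finset (Fin K → ι) :=
    Finset.univ.filter fun ω => ∀ m ∈ window p.1, ω m ≠ p.2
  let windows : Finset (ℕ × ι) := Finset.range (K + 1 - τ) ×ˢ Finset.univ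
  have hcover : (Finset.univ.filter fun ω : Fin K → ι => ¬ IsCovering τ ω)
      ⊆ windows.biUnion missing := by
    intro ω hω
    simp only [IsCovering, Finset.mem_filter_univ, not_forall, not_exists, not_and] at hω
    obtain ⟨k, hk, i, hki⟩ := hω
    simp only [windows, missing, window, Finset.mem_biUnion, Finset.mem_product, Finset.mem_range,
      Finset.mem_univ, Finset.mem_filter_univ, and_true, Prod.exists]
    exact ⟨k, i, by omega, fun m hm => hki m hm.1 hm.2⟩
  have hmissing : ∀ p ∈ windows, ((missing p).card : ℝ)
      ≤ Real.exp (-(τ / Fintype.card ι)) * (Fintype.card ι : ℝ) ^ K := by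
    intro p hp
    have hp1 := Finset.mem_range.1 (Finset.mem_product.1 hp).1
    have hcard : (window p.1).card = τ := card_filter_window (by omega)
    simpa [hcard] using card_filter_forall_ne_le_exp (window p.1) p.2
  have hwindows : (windows.card : ℝ) ≤ K * Fintype.card ι := by
    rw [Finset.card_product, Finset.card_range, Finset.card_univ]
    exact_mod_cast Nat.mul_le_mul_right _ (by omega)
  calc ((Finset.univ.filter fun ω : Fin K → ι => ¬ IsCovering τ ω).card : ℝ)
    _ ≤ ∑ p ∈ windows, ((missing p).card : ℝ) := by
      exact_mod_cast (Finset.card_le_card hcover).trans Finset.card_biUnion_le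
    _ ≤ windows.card • (Real.exp (-(τ / Fintype.card ι)) * (Fintype.card ι : ℝ) ^ K) :=
      Finset.sum_le_card_nsmul _ _ _ hmissing
    _ ≤ _ := by
      rw [nsmul_eq_mul, mul_assoc (_ * _)]
      gcongr

open Classical in
lemma one_sub_le_card_filter_isCovering_div [Nonempty ι] {K τ : ℕ} {δ : ℝ} (hK : 1 ≤ K)
    (hδ : 0 < δ) (hτ1 : 1 ≤ τ)
    (hτ : Fintype.card ι * Real.log (Fintype.card ι * K / δ) ≤ τ) :
    1 - δ ≤ (Finset.univ.filter fun ω : Fin K → ι => IsCovering τ ω).card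
      / (Fintype.card ι : ℝ) ^ K := by
  have hexp : K * Fintype.card ι * Real.exp (-(τ / Fintype.card ι)) ≤ δ :=
    calc (K * Fintype.card ι * Real.exp (-(τ / Fintype.card ι)) : ℝ)
      _ ≤ K * Fintype.card ι * Real.exp (-Real.log (Fintype.card ι * K / δ)) := by
        gcongr
        rwa [le_div_iff₀' (by positivity)]
      _ = δ := by
        rw [Real.exp_neg, Real.exp_log (by positivity)]
        field_simp
  have hcompl : ((Finset.univ.filter fun ω : Fin K → ι => IsCovering τ ω).card : ℝ)
      + (Finset.univ.filter fun ω : Fin K → ι => ¬ IsCovering τ ω).card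
      = (Fintype.card ι : ℝ) ^ K := by
    rw [← Nat.cast_add, Finset.card_filter_add_card_filter_not]
    simp
  rw [le_div_iff₀ (by positivity)]
  linarith [card_filter_not_isCovering_le (ι := ι) (K := K) hτ1,
    mul_le_mul_of_nonneg_right hexp (by positivity : 0 ≤ (Fintype.card ι : ℝ) ^ K)]

end Sampling

/-- The first `K` steps of SAGA with components `fi`, step size `α` and sample sequence `ω`:
`x` are the iterates, `g` the directions and `h i k` the gradient stored for index `i` before
step `k`, which is `0` until `i` is first sampled. The starting point `x 0` is arbitrary, and
nothing is required of the sequences beyond step `K`. -/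
structure IsSagaRun {ι E : Type*} [Fintype ι] [DecidableEq ι] [NormedAddCommGroup E]
    [InnerProductSpace ℝ E] [CompleteSpace E] (fi : ι → E → ℝ) (α : ℝ) {K : ℕ} (ω : Fin K → ι)
    (x g : ℕ → E) (h : ι → ℕ → E) : Prop where
  memory_zero : ∀ i, h i 0 = 0
  memory_succ : ∀ i k (hk : k < K),
    h i (k + 1) = if ω ⟨k, hk⟩ = i then gradient (fi i) (x k) else h i k
  direction_eq : ∀ k (hk : k < K),
    g k = (Fintype.card ι : ℝ)⁻¹ • (∑ i, h i k)
      + (gradient (fi (ω ⟨k, hk⟩)) (x k) - h (ω ⟨k, hk⟩) k)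
  iterate_succ : ∀ k < K, x (k + 1) = x k - α • g k

namespace IsSagaRun

variable {ι E : Type*} [Fintype ι] [DecidableEq ι] [NormedAddCommGroup E] [InnerProductSpace ℝ E]
  [CompleteSpace E] {fi : ι → E → ℝ} {f : E → ℝ} {α L μ B : ℝ} {K τ : ℕ} {ω : Fin K → ι}
  {x g : ℕ → E} {h : ι → ℕ → E} {xstar : E} {xistar : ι → E}

lemma norm_iterate_sub_le (hrun : IsSagaRun fi α ω x g h) (hα : 0 ≤ α) {j k : ℕ} (hjk : j ≤ k)
    (hτ : k - τ ≤ j) (hk : k ≤ K) :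
    ‖x j - x k‖ ≤ α * ∑ m ∈ Finset.Ico (k - τ) k, ‖g m‖ :=
  calc ‖x j - x k‖
    _ ≤ ∑ m ∈ Finset.Ico j k, α * ‖g m‖ := by
      rw [← dist_eq_norm]
      refine dist_le_Ico_sum_of_dist_le hjk fun {m} _ hm => ?_
      rw [hrun.iterate_succ m (by omega), dist_eq_norm, sub_sub_cancel, norm_smul,
        Real.norm_of_nonneg hα]
    _ ≤ ∑ m ∈ Finset.Ico (k - τ) k, α * ‖g m‖ :=
      Finset.sum_le_sum_of_subset_of_nonneg (Finset.Ico_subset_Ico_left hτ)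
        fun _ _ _ => by positivity
    _ = α * ∑ m ∈ Finset.Ico (k - τ) k, ‖g m‖ := (Finset.mul_sum ..).symm

lemma memory_eq_zero_or_exists (hrun : IsSagaRun fi α ω x g h) (i : ι) {k : ℕ} (hk : k ≤ K) :
    h i k = 0 ∨ ∃ j < k, h i k = gradient (fi i) (x j) := by
  induction k with
  | zero => exact .inl (hrun.memory_zero i)
  | succ k ih =>
    rw [hrun.memory_succ i k hk]
    split_ifs
    · exact .inr ⟨k, k.lt_succ_self, rfl⟩
    · exact (ih (by omega)).imp_right fun ⟨j, hj, hmem⟩ => ⟨j, by omega, hmem⟩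

lemma exists_memory_eq_of_sampled (hrun : IsSagaRun fi α ω x g h) {m : Fin K} {k : ℕ}
    (hmk : (m : ℕ) < k) (hk : k ≤ K) :
    ∃ j, (m : ℕ) ≤ j ∧ j < k ∧ h (ω m) k = gradient (fi (ω m)) (x j) := by
  induction k, hmk using Nat.le_induction with
  | base => exact ⟨m, le_rfl, Nat.lt_succ_self _, by simp [hrun.memory_succ _ _ hk]⟩
  | succ k hmk ih =>
    rw [hrun.memory_succ _ k hk]
    split_ifs
    · exact ⟨k, by omega, k.lt_succ_self, rfl⟩
    · obtain ⟨j, hmj, hjk, hmem⟩ := ih (by omega)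
      exact ⟨j, hmj, by omega, hmem⟩

lemma norm_memory_sub_gradient_le (hrun : IsSagaRun fi α ω x g h) (hcover : IsCovering τ ω)
    (hα : 0 ≤ α) (hL : 0 ≤ L)
    (hsmooth : ∀ i x y, ‖gradient (fi i) x - gradient (fi i) y‖ ≤ L * ‖x - y‖)
    (hcrit : ∀ i, gradient (fi i) (xistar i) = 0) (hB : ∀ i, ‖x 0 - xistar i‖ ≤ B)
    (i : ι) {k : ℕ} (hk : k ≤ K) :
    ‖h i k - gradient (fi i) (x k)‖
      ≤ L * ((if k < τ then B else 0) + α * ∑ m ∈ Finset.Ico (k - τ) k, ‖g m‖) := by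
  have hB0 : 0 ≤ B := (norm_nonneg _).trans (hB i)
  have hrecent {j : ℕ} (hjk : j < k) (hτ : k - τ ≤ j) : ‖x j - x k‖
      ≤ (if k < τ then B else 0) + α * ∑ m ∈ Finset.Ico (k - τ) k, ‖g m‖ :=
    (hrun.norm_iterate_sub_le hα hjk.le hτ hk).trans
      (le_add_of_nonneg_left (by split_ifs <;> simp [hB0]))
  suffices ∃ y, h i k = gradient (fi i) y ∧ ‖y - x k‖
      ≤ (if k < τ then B else 0) + α * ∑ m ∈ Finset.Ico (k - τ) k, ‖g m‖ by
    obtain ⟨y, hmem, hy⟩ := this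
    rw [hmem]
    exact (hsmooth i y (x k)).trans (mul_le_mul_of_nonneg_left hy hL)
  by_cases hkτ : k < τ
  · rcases hrun.memory_eq_zero_or_exists i hk with hmem | ⟨j, hjk, hmem⟩
    · refine ⟨xistar i, hmem.trans (hcrit i).symm, ?_⟩
      rw [if_pos hkτ]
      calc ‖xistar i - x k‖
        _ ≤ ‖xistar i - x 0‖ + ‖x 0 - x k‖ := norm_sub_le_norm_sub_add_norm_sub ..
        _ ≤ B + α * ∑ m ∈ Finset.Ico (k - τ) k, ‖g m‖ :=
          add_le_add ((norm_sub_rev _ _).trans_le (hB i))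
            (hrun.norm_iterate_sub_le hα k.zero_le (by omega) hk)
    · exact ⟨x j, hmem, hrecent hjk (by omega)⟩
  · obtain ⟨m, hm, hmk, rfl⟩ := hcover (k - τ) (by omega) i
    obtain ⟨j, hmj, hjk, hmem⟩ := hrun.exists_memory_eq_of_sampled (m := m) (by omega) hk
    exact ⟨x j, hmem, hrecent hjk (by omega)⟩

variable [Nonempty ι]

lemma norm_direction_sub_gradient_le (hrun : IsSagaRun fi α ω x g h)
    (hdiff : ∀ i, Differentiable ℝ (fi i)) (hf : ∀ z, f z = (∑ i, fi i z) / Fintype.card ι)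
    {k : ℕ} (hk : k < K) {r : ℝ} (hr : ∀ i, ‖h i k - gradient (fi i) (x k)‖ ≤ r) :
    ‖g k - gradient f (x k)‖ ≤ 2 * r := by
  have hsplit : g k - gradient f (x k)
      = (Fintype.card ι : ℝ)⁻¹ • ∑ i, (h i k - gradient (fi i) (x k))
        - (h (ω ⟨k, hk⟩) k - gradient (fi (ω ⟨k, hk⟩)) (x k)) := by
    rw [hrun.direction_eq k hk, (hasGradientAt_average hdiff hf _).gradient,
      Finset.sum_sub_distrib, smul_sub]
    abel
  rw [hsplit, two_mul]
  exact norm_sub_le_of_le (norm_inv_card_smul_sum_le hr) (hr _)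

lemma norm_direction_sub_gradient_sq_le (hrun : IsSagaRun fi α ω x g h) (hcover : IsCovering τ ω)
    (hα : 0 ≤ α) (hL : 0 ≤ L) (hdiff : ∀ i, Differentiable ℝ (fi i))
    (hsmooth : ∀ i x y, ‖gradient (fi i) x - gradient (fi i) y‖ ≤ L * ‖x - y‖)
    (hf : ∀ z, f z = (∑ i, fi i z) / Fintype.card ι)
    (hcrit : ∀ i, gradient (fi i) (xistar i) = 0) (hB : ∀ i, ‖x 0 - xistar i‖ ≤ B)
    {k : ℕ} (hk : k < K) :
    ‖g k - gradient f (x k)‖ ^ 2 ≤ 8 * L ^ 2 *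
      ((if k < τ then B ^ 2 else 0) + α ^ 2 * (τ * ∑ m ∈ Finset.Ico (k - τ) k, ‖g m‖ ^ 2)) := by
  set W := ∑ m ∈ Finset.Ico (k - τ) k, ‖g m‖
  have hW_sq : W ^ 2 ≤ τ * ∑ m ∈ Finset.Ico (k - τ) k, ‖g m‖ ^ 2 := by
    refine sq_sum_le_card_mul_sum_sq.trans ?_
    gcongr
    rw [Nat.card_Ico]
    omega
  have herr : ‖g k - gradient f (x k)‖ ≤ 2 * (L * ((if k < τ then B else 0) + α * W)) :=
    hrun.norm_direction_sub_gradient_le hdiff hf hk fun i =>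
      hrun.norm_memory_sub_gradient_le hcover hα hL hsmooth hcrit hB i hk.le
  calc ‖g k - gradient f (x k)‖ ^ 2
    _ ≤ (2 * (L * ((if k < τ then B else 0) + α * W))) ^ 2 := by gcongr
    _ = 4 * L ^ 2 * ((if k < τ then B else 0) + α * W) ^ 2 := by ring
    _ ≤ 4 * L ^ 2 * (2 * ((if k < τ then B else 0) ^ 2 + (α * W) ^ 2)) := by
      gcongr
      exact add_sq_le
    _ = 8 * L ^ 2 * ((if k < τ then B ^ 2 else 0) + α ^ 2 * W ^ 2) := by
      rw [ite_pow, zero_pow two_ne_zero]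
      ring
    _ ≤ _ := by gcongr

lemma gap_succ_le (hrun : IsSagaRun fi α ω x g h) (hcover : IsCovering τ ω)
    (hα : 0 ≤ α) (hL : 0 ≤ L) (hdiff : ∀ i, Differentiable ℝ (fi i))
    (hsmooth : ∀ i x y, ‖gradient (fi i) x - gradient (fi i) y‖ ≤ L * ‖x - y‖)
    (hf : ∀ z, f z = (∑ i, fi i z) / Fintype.card ι)
    (hPL : ∀ y, 2 * μ * (f y - f xstar) ≤ ‖gradient f y‖ ^ 2)
    (hcrit : ∀ i, gradient (fi i) (xistar i) = 0) (hB : ∀ i, ‖x 0 - xistar i‖ ≤ B)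
    {k : ℕ} (hk : k < K) :
    f (x (k + 1)) - f xstar ≤ (1 - α * μ) * (f (x k) - f xstar) +
      (-(α / 2 * (1 - L * α)) * ‖g k‖ ^ 2
        + 4 * α ^ 3 * L ^ 2 * τ * ∑ j ∈ Finset.Ico (k - τ) k, ‖g j‖ ^ 2
        + if k < τ then 4 * α * L ^ 2 * B ^ 2 else 0) := by
  have hstep := inexact_gradient_step_le (differentiable_average hdiff hf)
    (norm_gradient_average_sub_le hdiff hf hsmooth) (x k) (g k) α
  have herr := hrun.norm_direction_sub_gradient_sq_le hcover hα hL hdiff hsmooth hf hcrit hB hk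
  rw [hrun.iterate_succ k hk]
  have hα2 : 0 ≤ α / 2 := by positivity
  have hPL_scaled := mul_le_mul_of_nonneg_left (hPL (x k)) hα2
  have herr_scaled := mul_le_mul_of_nonneg_left herr hα2
  split_ifs at herr_scaled ⊢ <;> linarith

lemma gap_le (hrun : IsSagaRun fi α ω x g h) (hcover : IsCovering τ ω) (hτ : 1 ≤ τ)
    (hμ : 0 ≤ μ) (hμL : μ ≤ L) (hα : 0 ≤ α) (hατ : 16 * L * τ * α ≤ 1)
    (hdiff : ∀ i, Differentiable ℝ (fi i))
    (hsmooth : ∀ i x y, ‖gradient (fi i) x - gradient (fi i) y‖ ≤ L * ‖x - y‖)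
    (hf : ∀ z, f z = (∑ i, fi i z) / Fintype.card ι)
    (hPL : ∀ y, 2 * μ * (f y - f xstar) ≤ ‖gradient f y‖ ^ 2)
    (hmin : ∀ y, f xstar ≤ f y) (hcrit : ∀ i, gradient (fi i) (xistar i) = 0)
    (hBstar : ‖x 0 - xstar‖ ≤ B) (hB : ∀ i, ‖x 0 - xistar i‖ ≤ B) :
    f (x K) - f xstar ≤ L * B ^ 2 * (1 - α * μ) ^ K := by
  have hL : 0 ≤ L := hμ.trans hμL
  have hτ' : (1 : ℝ) ≤ τ := by exact_mod_cast hτ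
  have hαμ : α * μ ≤ 1 / 16 :=
    calc α * μ
      _ ≤ τ * (α * L) := by nlinarith [mul_nonneg hα hL, mul_le_mul_of_nonneg_left hμL hα]
      _ ≤ 1 / 16 := by linarith
  have hinitial : f (x 0) - f xstar ≤ L / 2 * B ^ 2 :=
    (sub_le_sq_of_forall_le (differentiable_average hdiff hf)
      (norm_gradient_average_sub_le hdiff hf hsmooth) hmin (x 0)).trans (by gcongr)
  calc f (x K) - f xstar
    _ ≤ (1 - α * μ) ^ K * (f (x 0) - f xstar
          + τ * (4 * α * L ^ 2 * B ^ 2) / (1 - α * μ) ^ τ) :=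
      le_pow_mul_of_delayed_recursion (F := fun k => f (x k) - f xstar) (by linarith)
        (by linarith [mul_nonneg hα hμ]) (fun k => sq_nonneg ‖g k‖) (by positivity)
        (by positivity) (delayed_coeff_le hμ hμL hα hτ hατ)
        fun k hk => hrun.gap_succ_le hcover hα hL hdiff hsmooth hf hPL hcrit hB hk
    _ ≤ (1 - α * μ) ^ K * (L / 2 * B ^ 2 + L / 2 * B ^ 2) := by
      gcongr
      · exact pow_nonneg (by linarith) K
      · exact initial_forcing_le hμ hμL hα hτ hατ
    _ = L * B ^ 2 * (1 - α * μ) ^ K := by ring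

end IsSagaRun

theorem saga_strongly_convex_high_prob_general {ι E : Type*} [Fintype ι] [Nonempty ι]
    [DecidableEq ι] [NormedAddCommGroup E] [InnerProductSpace ℝ E] [CompleteSpace E]
    {L μ : ℝ} (hμ : 0 ≤ μ) (hμL : μ ≤ L) {fi : ι → E → ℝ} (hdiff : ∀ i, Differentiable ℝ (fi i))
    (hsmooth : ∀ i x y, ‖gradient (fi i) x - gradient (fi i) y‖ ≤ L * ‖x - y‖)
    {f : E → ℝ} (hf : ∀ z, f z = (∑ i, fi i z) / Fintype.card ι) {xstar : E}
    (hPL : ∀ y, 2 * μ * (f y - f xstar) ≤ ‖gradient f y‖ ^ 2) (hmin : ∀ y, f xstar ≤ f y)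
    {xistar : ι → E} (hcrit : ∀ i, gradient (fi i) (xistar i) = 0)
    {K : ℕ} (hK : 1 ≤ K) {δ : ℝ} (hδ : 0 < δ) {τ : ℕ} (hτ1 : 1 ≤ τ)
    (hτ : Fintype.card ι * Real.log (Fintype.card ι * K / δ) ≤ τ)
    {α : ℝ} (hα : 0 ≤ α) (hατ : 16 * L * τ * α ≤ 1)
    {x g : (Fin K → ι) → ℕ → E} {h : (Fin K → ι) → ι → ℕ → E}
    (hrun : ∀ ω, IsSagaRun fi α ω (x ω) (g ω) (h ω)) {B : ℝ}
    (hBstar : ∀ ω, ‖x ω 0 - xstar‖ ≤ B) (hB : ∀ ω i, ‖x ω 0 - xistar i‖ ≤ B) :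
    1 - δ ≤ (Finset.univ.filter fun ω : Fin K → ι =>
      f (x ω K) - f xstar ≤ L * B ^ 2 * (1 - α * μ) ^ K).card / (Fintype.card ι : ℝ) ^ K := by
  refine (one_sub_le_card_filter_isCovering_div hK hδ hτ1 hτ).trans ?_
  gcongr with ω
  exact fun hcover => (hrun ω).gap_le hcover hτ1 hμ hμL hα hατ hdiff hsmooth hf hPL hmin hcrit
    (hBstar ω) (hB ω)

lemma mul_one_sub_pow_le_six_mul_rate {L μ B τ : ℝ} (K : ℕ) (hL : 0 < L) (hμ : 0 < μ)
    (hμL : μ ≤ L) (hτ : 1 ≤ τ) :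
    L * B ^ 2 * (1 - 1 / (16 * L * τ) * μ) ^ K
      ≤ 6 * L * B ^ 2 * (1 - 1 / (64 * τ * (L / μ))) ^ K := by
  have hrate : 1 / (64 * τ * (L / μ)) = 1 / (16 * L * τ) * μ / 4 := by
    field_simp
    norm_num
  have hsmall : 1 / (16 * L * τ) * μ ≤ 1 := by
    rw [one_div_mul_eq_div, div_le_one (by positivity)]
    nlinarith
  have hpos : 0 < 1 / (16 * L * τ) * μ := by positivity
  rw [hrate]
  gcongr <;> linarith

lemma log_mul_div_pos {N K : ℕ} {δ : ℝ} (hN : 1 ≤ N) (hK : 1 ≤ K) (hδ0 : 0 < δ) (hδ1 : δ < 1) :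
    0 < Real.log (N * K / δ) := by
  have hNK : (1 : ℝ) ≤ N * K := by exact_mod_cast Nat.mul_pos hN hK
  exact Real.log_pos ((one_lt_div hδ0).2 (by linarith))

/- STATEMENT 15 (SAGA, strongly convex case, high probability).
The i.i.d. uniform sampling sequence is modeled as `ω : Fin K → Fin N`, uniformly
distributed, so the probability of an event is its cardinality divided by `N ^ K`.
The trajectory `x ω`, direction `g ω`, and memory `h ω` are driven by the sample `ω`. -/
open Classical in
theorem saga_strongly_convex_high_prob (d N : ℕ) (hd : 1 ≤ d) (hN : 1 ≤ N)
    (L μ : ℝ) (hL : 0 < L) (hμ : 0 < μ)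
    (fi : Fin N → EuclideanSpace ℝ (Fin d) → ℝ)
    (hdiff : ∀ i, Differentiable ℝ (fi i))
    (hsmooth : ∀ i x y, ‖gradient (fi i) x - gradient (fi i) y‖ ≤ L * ‖x - y‖)
    (f : EuclideanSpace ℝ (Fin d) → ℝ)
    (hf : ∀ z, f z = (∑ i, fi i z) / N)
    (hsc : ∀ y z, f y + ⟪gradient f y, z - y⟫ + μ / 2 * ‖z - y‖ ^ 2 ≤ f z)
    (xstar : EuclideanSpace ℝ (Fin d)) (hmin : ∀ y, f xstar ≤ f y)
    (xistar : Fin N → EuclideanSpace ℝ (Fin d))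
    (hxi : ∀ i y, fi i (xistar i) ≤ fi i y)
    (B : ℝ) (hB : B = max ‖xstar‖ (⨆ i, ‖xistar i‖))
    (κ : ℝ) (hκ : κ = L / μ)
    (K : ℕ) (hK1 : 1 ≤ K) (δ : ℝ) (hδ0 : 0 < δ) (hδ1 : δ < 1)
    (τ : ℕ) (hτ : τ = ⌈(8 * (N : ℝ) / 3) * Real.log ((N : ℝ) * K / δ)⌉₊)
    (α : ℝ) (hα : α = 1 / (16 * L * τ))
    (hKτ : τ < K)
    (x g : (Fin K → Fin N) → ℕ → EuclideanSpace ℝ (Fin d))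
    (h : (Fin K → Fin N) → Fin N → ℕ → EuclideanSpace ℝ (Fin d))
    (hx0 : ∀ ω, x ω 0 = 0)
    (hh0 : ∀ ω i, h ω i 0 = 0)
    (hhrec : ∀ ω (i : Fin N) (k : ℕ) (hk : k < K),
      h ω i (k + 1) = if ω ⟨k, hk⟩ = i then gradient (fi i) (x ω k) else h ω i k)
    (hg : ∀ ω (k : ℕ) (hk : k < K),
      g ω k = (N : ℝ)⁻¹ • (∑ i, h ω i k)
        + (gradient (fi (ω ⟨k, hk⟩)) (x ω k) - h ω (ω ⟨k, hk⟩) k))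
    (hxrec : ∀ ω (k : ℕ), k < K → x ω (k + 1) = x ω k - α • g ω k) :
    1 - δ ≤
      (Finset.univ.filter (fun ω : Fin K → Fin N =>
          f (x ω K) - f xstar ≤
            6 * L * B ^ 2 * (1 - 1 / (64 * (τ : ℝ) * κ)) ^ K)).card / (N : ℝ) ^ K := by
  have : Nonempty (Fin N) := ⟨⟨0, hN⟩⟩
  have : Nonempty (Fin d) := ⟨⟨0, hd⟩⟩
  have hf' : ∀ z, f z = (∑ i, fi i z) / Fintype.card (Fin N) := by simpa using hf
  have hμL : μ ≤ L := strongConvexity_le_smoothness (differentiable_average hdiff hf')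
    (norm_gradient_average_sub_le hdiff hf' hsmooth) hsc
  have hlog := log_mul_div_pos hN hK1 hδ0 hδ1
  have hτ1 : 1 ≤ τ := hτ ▸ Nat.ceil_pos.2 (by positivity)
  have hτN : N * Real.log (N * K / δ) ≤ τ := by
    have hceil := hτ ▸ Nat.le_ceil (8 * (N : ℝ) / 3 * Real.log (N * K / δ))
    linarith [mul_nonneg N.cast_nonneg hlog.le]
  have hBi (i : Fin N) : ‖xistar i‖ ≤ B :=
    hB ▸ (le_ciSup (Set.finite_range fun i => ‖xistar i‖).bddAbove i).trans (le_max_right _ _)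
  have hprob := saga_strongly_convex_high_prob_general hμ.le hμL hdiff hsmooth hf'
    (fun y => polyakLojasiewicz_of_strongConvex hμ.le hsc y xstar) hmin
    (fun i => gradient_eq_zero_of_forall_le (hxi i)) hK1 hδ0 hτ1 (by simpa using hτN)
    (α := α) (by rw [hα]; positivity) (by rw [hα]; field_simp; rfl)
    (fun ω => ⟨hh0 ω, hhrec ω, by simpa using hg ω, hxrec ω⟩) (B := B)
    (by simp [hx0, hB]) (by simpa only [hx0, zero_sub, norm_neg] using fun _ => hBi)
  rw [Fintype.card_fin, hα] at hprob
  grw [mul_one_sub_pow_le_six_mul_rate K hL hμ hμL (by exact_mod_cast hτ1), ← hκ] at hprob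
  exact hprob
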